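/- Let H₀, G, G₀, K, E, E' be groups with group homomorphisms σ : E → H₀, ι : G → E, ρ : E → G₀, κ' : G → E', σ' : E' → G₀, ι' : K → E' and an action ξ : G₀ → Aut(G), satisfying: ρ ∘ ι = σ' ∘ κ'; ι is injective with image ker σ; ι' is injective with image ker σ'; e * ι(g) * e⁻¹ = ι(ξ(ρ e)(g)) for all e ∈ E, g ∈ G; e' * κ'(g) * e'⁻¹ = κ'(ξ(σ' e')(g)) for all e' ∈ E', g ∈ G. Let P = {(e,e') ∈ E × E' : ρ(e) = σ'(e')}, let N = {(ι g, κ' g) : g ∈ G} (a normal subgroup of P), and let q : P → P/N be the quotient map. Then the assignment (e,e') ↦ σ(e) descends to a group homomorphism σ̄ : P/N → H₀, and the kernel of σ̄ is exactly the image of K under the homomorphism k ↦ q(1, ι'(k)). -/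

import Mathlib

/-! An element `(e, e')` of the pullback lies over `1 : H₀` exactly when `e = ι g` for some `g`.
Dividing by `(ι g, κ' g) ∈ N` then moves it into `1 × ker σ'` without changing its class modulo
`N`, so the kernel of `(e, e') ↦ σ e` on the pullback is `(1 × ker σ') ⊔ N`. -/

namespace Butterfly

variable {H₀ G G₀ K E E' : Type*} [Group E] [Group E'] [Group H₀] [Group G] [Group G₀] [Group K]

/-- The fibre product `E ×_{G₀} E'`, as a subgroup of `E × E'`; it is the pullback of the two
middle extensions of composable butterflies. -/
abbrev fiberProduct (ρ : E →* G₀) (σ' : E' →* G₀) : Subgroup (E × E') :=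
  (ρ.comp (MonoidHom.fst _ _)).eqLocus (σ'.comp (MonoidHom.snd _ _))

/-- The subgroup `N` of pairs `(ι g, κ' g)`, by which the fibre product is divided to compose two
butterflies. Through `subgroupOf` it keeps only the pairs lying in the fibre product, which are all
of them once `ρ ∘ ι = σ' ∘ κ'`. -/
abbrev pairedImage (ι : G →* E) (κ' : G →* E') (ρ : E →* G₀) (σ' : E' →* G₀) :
    Subgroup (fiberProduct ρ σ') :=
  (ι.prod κ').range.subgroupOf (fiberProduct ρ σ')

theorem range_prod_le_fiberProduct {ι : G →* E} {ρ : E →* G₀} {κ' : G →* E'} {σ' : E' →* G₀}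
    (ha : ∀ g, ρ (ι g) = σ' (κ' g)) : (ι.prod κ').range ≤ fiberProduct ρ σ' := by
  rintro _ ⟨g, rfl⟩
  exact ha g

theorem bot_prod_ker_le_fiberProduct (ρ : E →* G₀) (σ' : E' →* G₀) :
    (⊥ : Subgroup E).prod σ'.ker ≤ fiberProduct ρ σ' := by
  rintro ⟨_, e'⟩ ⟨rfl, he'⟩
  exact (map_one ρ).trans (MonoidHom.mem_ker.mp he').symm

theorem range_prod_top_inf_fiberProduct {ι : G →* E} {ρ : E →* G₀} {κ' : G →* E'}
    {σ' : E' →* G₀} (ha : ∀ g, ρ (ι g) = σ' (κ' g)) :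
    ι.range.prod ⊤ ⊓ fiberProduct ρ σ' = (⊥ : Subgroup E).prod σ'.ker ⊔ (ι.prod κ').range := by
  apply le_antisymm
  · rintro ⟨_, e'⟩ ⟨⟨⟨g, rfl⟩, -⟩, (hp : ρ (ι g) = σ' e')⟩
    have hker : e' * (κ' g)⁻¹ ∈ σ'.ker := by
      rw [MonoidHom.mem_ker, map_mul, map_inv, ← hp, ha, mul_inv_cancel]
    have hfactor : (ι g, e') = (1, e' * (κ' g)⁻¹) * (ι.prod κ') g := by simp
    rw [hfactor]
    exact Subgroup.mul_mem_sup ⟨Subgroup.one_mem _, hker⟩ ⟨g, rfl⟩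
  · refine sup_le (le_inf ?_ (bot_prod_ker_le_fiberProduct ρ σ'))
      (le_inf ?_ (range_prod_le_fiberProduct ha))
    · exact Subgroup.prod_mono bot_le le_top
    · rintro _ ⟨g, rfl⟩
      exact ⟨⟨g, rfl⟩, Subgroup.mem_top _⟩

theorem ker_domRestrict_comp_fst {σ : E →* H₀} {ι : G →* E} {ρ : E →* G₀} {κ' : G →* E'}
    {σ' : E' →* G₀} (ha : ∀ g, ρ (ι g) = σ' (κ' g)) (hι : ι.range = σ.ker) :
    ((σ.comp (MonoidHom.fst E E')).domRestrict (fiberProduct ρ σ')).ker =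
      ((⊥ : Subgroup E).prod σ'.ker).subgroupOf (fiberProduct ρ σ') ⊔ pairedImage ι κ' ρ σ' := by
  have hker : (σ.comp (MonoidHom.fst E E')).ker = ι.range.prod ⊤ := by
    rw [← MonoidHom.comap_ker, ← hι, Subgroup.prod_top]
  rw [MonoidHom.ker_domRestrict, hker, ← Subgroup.inf_subgroupOf_right,
    range_prod_top_inf_fiberProduct ha,
    Subgroup.subgroupOf_sup (bot_prod_ker_le_fiberProduct ρ σ') (range_prod_le_fiberProduct ha)]

theorem ker_lift_of_ker_eq_sup {N A : Subgroup G} [N.Normal] {φ : G →* H₀}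
    (hφ : φ.ker = A ⊔ N) :
    (QuotientGroup.lift N φ (hφ ▸ le_sup_right)).ker = A.map (QuotientGroup.mk' N) := by
  rw [QuotientGroup.ker_lift, hφ, Subgroup.map_sup, QuotientGroup.map_mk'_self, sup_bot_eq]

theorem mem_map_mk'_bot_prod_range_iff {ι' : K →* E'} {P : Subgroup (E × E')}
    {N : Subgroup P} [N.Normal] {x : P ⧸ N} :
    x ∈ (((⊥ : Subgroup E).prod ι'.range).subgroupOf P).map (QuotientGroup.mk' N) ↔
      ∃ (k : K) (p : P), (p : E × E') = (1, ι' k) ∧ QuotientGroup.mk p = x := by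
  constructor
  · rintro ⟨p, ⟨hfst, k, hk⟩, rfl⟩
    exact ⟨k, p, Prod.ext hfst hk.symm, rfl⟩
  · rintro ⟨k, p, hp, rfl⟩
    refine Subgroup.mem_map_of_mem (QuotientGroup.mk' N) (Subgroup.mem_subgroupOf.mpr ?_)
    rw [hp]
    exact ⟨Subgroup.one_mem _, k, rfl⟩

end Butterfly

open Butterfly in
theorem butterfly_group_composite_kernel_general
    {H₀ G G₀ K E E' : Type*}
    [Group H₀] [Group G] [Group G₀] [Group K] [Group E] [Group E']
    (σ : E →* H₀) (ι : G →* E) (ρ : E →* G₀)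
    (κ' : G →* E') (σ' : E' →* G₀) (ι' : K →* E')
    (ha : ∀ g, ρ (ι g) = σ' (κ' g))
    (hι : ι.range = σ.ker) (hι' : ι'.range = σ'.ker)
    [(pairedImage ι κ' ρ σ').Normal] :
    ∃ σbar : fiberProduct ρ σ' ⧸ pairedImage ι κ' ρ σ' →* H₀,
      (∀ p, σbar (QuotientGroup.mk p) = σ (p : E × E').1) ∧
      (∀ x, x ∈ σbar.ker ↔ ∃ (k : K) (p : fiberProduct ρ σ'),
        (p : E × E') = (1, ι' k) ∧ QuotientGroup.mk p = x) := by
  have hker := ker_domRestrict_comp_fst ha hι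
  refine ⟨QuotientGroup.lift _ ((σ.comp (MonoidHom.fst E E')).domRestrict (fiberProduct ρ σ'))
    (hker ▸ le_sup_right), fun _ ↦ rfl, fun x ↦ ?_⟩
  rw [ker_lift_of_ker_eq_sup hker, ← hι', mem_map_mk'_bot_prod_range_iff]

/-- in the composition of two butterflies of groups, the map
`(e,e') ↦ σ e` descends to a homomorphism `σ̄ : P/N → H₀` whose kernel is exactly the
image of `K` under `k ↦ q(1, ι' k)`. -/
theorem butterfly_group_composite_kernel
    {H₀ G G₀ K E E' : Type*}
    [Group H₀] [Group G] [Group G₀] [Group K] [Group E] [Group E']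
    (σ : E →* H₀) (ι : G →* E) (ρ : E →* G₀)
    (κ' : G →* E') (σ' : E' →* G₀) (ι' : K →* E')
    (ξ : G₀ →* MulAut G)
    (ha : ∀ g, ρ (ι g) = σ' (κ' g))
    (hιinj : Function.Injective ι) (hιker : ι.range = σ.ker)
    (hι'inj : Function.Injective ι') (hι'ker : ι'.range = σ'.ker)
    (hb : ∀ (e : E) (g : G), e * ι g * e⁻¹ = ι (ξ (ρ e) g))
    (hc : ∀ (e' : E') (g : G), e' * κ' g * e'⁻¹ = κ' (ξ (σ' e') g))
    (hN : ((ι.prod κ').range.subgroupOf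
        ((ρ.comp (MonoidHom.fst E E')).eqLocus (σ'.comp (MonoidHom.snd E E')))).Normal) :
    haveI := hN
    ∃ σbar :
        (((ρ.comp (MonoidHom.fst E E')).eqLocus (σ'.comp (MonoidHom.snd E E'))) ⧸
          ((ι.prod κ').range.subgroupOf
            ((ρ.comp (MonoidHom.fst E E')).eqLocus (σ'.comp (MonoidHom.snd E E'))))) →* H₀,
      (∀ p, σbar (QuotientGroup.mk p) = σ (p : E × E').1) ∧
      (∀ x, x ∈ σbar.ker ↔
        ∃ (k : K)
          (p : ((ρ.comp (MonoidHom.fst E E')).eqLocus (σ'.comp (MonoidHom.snd E E')))),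
          (p : E × E') = (1, ι' k) ∧ QuotientGroup.mk p = x) := by
  have := hN
  exact butterfly_group_composite_kernel_general σ ι ρ κ' σ' ι' ha hιker hι'ker
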